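/- For all η₁, η₂ > 0 such that T₁(η₁) > 0, T₂(η₂) > 0 and S(η₁,η₂) > 0, the double Laplace transform of the covariance satisfies ∫₀^∞ ∫₀^∞ e^{−η₁t₁−η₂t₂} Cov(L₁(t₁), L₂(t₂)) dt₁ dt₂ = (T₁(η₁) + T₂(η₂) − S(η₁,η₂)) / (η₁ η₂ T₁(η₁) T₂(η₂) S(η₁,η₂)), where Cov(L₁(t₁), L₂(t₂)) := E[L₁(t₁) L₂(t₂)] − E[L₁(t₁)]·E[L₂(t₂)]. -/

import Mathlib

open MeasureTheory ProbabilityTheory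

open Set
open scoped ENNReal

/-!
Along a nondecreasing path, `L(t)` is the Lebesgue measure of `{x > 0 | H(x) ≤ t}`, so Tonelli gives
`∫ e^{-ηt} L(t) dt = η⁻¹ ∫ e^{-ηH(x)} dx`. The double transform of `E[L₁(t₁) L₂(t₂)]` is therefore
`(η₁η₂)⁻¹ ∬ E[e^{-η₁H₁(x) - η₂H₂(y)}] dx dy`. For `x ≤ y`, splitting `H₂(y)` at time `x` and using
independence of the increment evaluates the expectation as `e^{-S(η₁,η₂)x - T₂(η₂)(y-x)}`; over this
half of the quadrant the integral is `1 / (S T₂)`, and over the other one it is `1 / (S T₁)` by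
symmetry. The product of the means has double transform `1 / (η₁T₁) · 1 / (η₂T₂)`.
-/

section Fubini

variable {α β Ω : Type*} [MeasurableSpace α] [MeasurableSpace β] [MeasurableSpace Ω]

lemma lintegral_lintegral_mul_lintegral {μ : Measure α} {ν : Measure β} {P : Measure Ω}
    [SFinite μ] [SFinite ν] [SFinite P] {f : α → Ω → ℝ≥0∞} {g : β → Ω → ℝ≥0∞}
    (hf : Measurable (Function.uncurry f)) (hg : Measurable (Function.uncurry g)) :
    ∫⁻ ω, (∫⁻ x, f x ω ∂μ) * (∫⁻ y, g y ω ∂ν) ∂P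
      = ∫⁻ x, ∫⁻ y, ∫⁻ ω, f x ω * g y ω ∂P ∂ν ∂μ := by
  have hf' : Measurable fun p : α × Ω => f p.1 p.2 := hf
  have hg' : Measurable fun p : β × Ω => g p.1 p.2 := hg
  calc ∫⁻ ω, (∫⁻ x, f x ω ∂μ) * (∫⁻ y, g y ω ∂ν) ∂P
      = ∫⁻ ω, ∫⁻ x, f x ω * ∫⁻ y, g y ω ∂ν ∂μ ∂P :=
        lintegral_congr fun ω => (lintegral_mul_const _ (by fun_prop)).symm
    _ = ∫⁻ x, ∫⁻ ω, f x ω * ∫⁻ y, g y ω ∂ν ∂P ∂μ :=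
        lintegral_lintegral_swap (by fun_prop)
    _ = ∫⁻ x, ∫⁻ ω, ∫⁻ y, f x ω * g y ω ∂ν ∂P ∂μ :=
        lintegral_congr fun x => lintegral_congr fun ω =>
          (lintegral_const_mul _ (by fun_prop)).symm
    _ = ∫⁻ x, ∫⁻ y, ∫⁻ ω, f x ω * g y ω ∂P ∂ν ∂μ :=
        lintegral_congr fun x => lintegral_lintegral_swap (by fun_prop)

lemma lintegral_Ioi_lintegral_Ioi_eq_add [LinearOrder α] [TopologicalSpace α]
    [OrderClosedTopology α] [SecondCountableTopology α] [OpensMeasurableSpace α]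
    (μ : Measure α) [SFinite μ] {f : α → α → ℝ≥0∞} (hf : Measurable (Function.uncurry f))
    (a : α) :
    ∫⁻ x in Ioi a, ∫⁻ y in Ioi a, f x y ∂μ ∂μ
      = ∫⁻ x in Ioi a, ∫⁻ y in Ioi x, f x y ∂μ ∂μ
        + ∫⁻ y in Ioi a, ∫⁻ x in Ici y, f x y ∂μ ∂μ := by
  have below : ∫⁻ x in Ioi a, ∫⁻ y in Ioc a x, f x y ∂μ ∂μ
      = ∫⁻ y in Ioi a, ∫⁻ x in Ici y, f x y ∂μ ∂μ := by
    have hD : MeasurableSet {p : α × α | p.2 ≤ p.1} := measurableSet_le (by fun_prop) (by fun_prop)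
    calc ∫⁻ x in Ioi a, ∫⁻ y in Ioc a x, f x y ∂μ ∂μ
        = ∫⁻ x in Ioi a, ∫⁻ y in Ioi a, (Iic x).indicator (f x) y ∂μ ∂μ := by
          simp only [setLIntegral_indicator measurableSet_Iic, Iic_inter_Ioi]
      _ = ∫⁻ y in Ioi a, ∫⁻ x in Ioi a, (Ici y).indicator (f · y) x ∂μ ∂μ :=
          lintegral_lintegral_swap (hf.indicator hD).aemeasurable
      _ = ∫⁻ y in Ioi a, ∫⁻ x in Ici y, f x y ∂μ ∂μ := by
          refine setLIntegral_congr_fun measurableSet_Ioi fun y hy => ?_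
          simp only [setLIntegral_indicator measurableSet_Ici,
            inter_eq_left.2 (Ici_subset_Ioi.2 hy)]
  have inner_split : ∀ x ∈ Ioi a, ∫⁻ y in Ioi a, f x y ∂μ
      = ∫⁻ y in Ioi x, f x y ∂μ + ∫⁻ y in Ioc a x, f x y ∂μ := fun x hx => by
    rw [add_comm, ← lintegral_union measurableSet_Ioi (Ioc_disjoint_Ioi le_rfl),
      Ioc_union_Ioi_eq_Ioi (le_of_lt hx)]
  have hmeas : Measurable fun x => ∫⁻ y in Ioi x, f x y ∂μ := by
    have hD : MeasurableSet {p : α × α | p.1 < p.2} := measurableSet_lt (by fun_prop) (by fun_prop)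
    simp only [← lintegral_indicator measurableSet_Ioi]
    exact (hf.indicator hD).lintegral_prod_right'
  rw [← below, ← lintegral_add_left hmeas]
  exact setLIntegral_congr_fun measurableSet_Ioi inner_split

end Fubini

section ToReal

variable {α : Type*} [MeasurableSpace α] {μ : Measure α}

lemma integral_eq_toReal_lintegral_of_ae_eq_ofReal {f : α → ℝ≥0∞} {g : α → ℝ}
    (hf : AEMeasurable f μ) (hg : 0 ≤ᵐ[μ] g) (hfg : ∀ᵐ x ∂μ, f x = .ofReal (g x)) :
    ∫ x, g x ∂μ = (∫⁻ x, f x ∂μ).toReal := by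
  have hfin : ∀ᵐ x ∂μ, f x < ∞ := hfg.mono fun x hx => hx ▸ ENNReal.ofReal_lt_top
  rw [← integral_toReal hf hfin]
  refine integral_congr_ae ?_
  filter_upwards [hg, hfg] with x hgx hfgx
  rw [hfgx, ENNReal.toReal_ofReal hgx]

lemma covariance_eq_toReal_lintegral_sub {X Y : α → ℝ≥0∞} {U V : α → ℝ}
    (hX : AEMeasurable X μ) (hY : AEMeasurable Y μ) (hU : 0 ≤ᵐ[μ] U) (hV : 0 ≤ᵐ[μ] V)
    (hXU : ∀ᵐ x ∂μ, X x = .ofReal (U x)) (hYV : ∀ᵐ x ∂μ, Y x = .ofReal (V x)) :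
    ∫ x, U x * V x ∂μ - (∫ x, U x ∂μ) * ∫ x, V x ∂μ
      = (∫⁻ x, X x * Y x ∂μ).toReal - ((∫⁻ x, X x ∂μ) * ∫⁻ x, Y x ∂μ).toReal := by
  have hUV : 0 ≤ᵐ[μ] fun x => U x * V x := by
    filter_upwards [hU, hV] with x hUx hVx using mul_nonneg hUx hVx
  have hXY : ∀ᵐ x ∂μ, X x * Y x = .ofReal (U x * V x) := by
    filter_upwards [hU, hXU, hYV] with x hUx hXUx hYVx
    rw [hXUx, hYVx, ENNReal.ofReal_mul hUx]
  rw [integral_eq_toReal_lintegral_of_ae_eq_ofReal (hX.mul hY) hUV hXY,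
    integral_eq_toReal_lintegral_of_ae_eq_ofReal hX hU hXU,
    integral_eq_toReal_lintegral_of_ae_eq_ofReal hY hV hYV, ENNReal.toReal_mul]
  rfl

lemma integrable_and_integral_toReal_sub {f g : α → ℝ≥0∞}
    (hf : AEMeasurable f μ) (hg : AEMeasurable g μ)
    (hf_fin : ∫⁻ x, f x ∂μ ≠ ∞) (hg_fin : ∫⁻ x, g x ∂μ ≠ ∞) :
    Integrable (fun x => (f x).toReal - (g x).toReal) μ ∧
    ∫ x, ((f x).toReal - (g x).toReal) ∂μ = (∫⁻ x, f x ∂μ).toReal - (∫⁻ x, g x ∂μ).toReal := by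
  have hf_int := integrable_toReal_of_lintegral_ne_top hf hf_fin
  have hg_int := integrable_toReal_of_lintegral_ne_top hg hg_fin
  refine ⟨hf_int.sub hg_int, ?_⟩
  rw [integral_sub hf_int hg_int, integral_toReal hf (ae_lt_top' hf hf_fin),
    integral_toReal hg (ae_lt_top' hg hg_fin)]

end ToReal

/-- The decaying exponential `e⁻ˣ`, with values in `[0, ∞]` so that Tonelli's theorem applies
without integrability side conditions. -/
noncomputable def expNeg (x : ℝ) : ℝ≥0∞ := .ofReal (Real.exp (-x))

@[fun_prop]
lemma measurable_expNeg : Measurable expNeg := by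
  unfold expNeg
  fun_prop

lemma toReal_expNeg (x : ℝ) : (expNeg x).toReal = Real.exp (-x) :=
  ENNReal.toReal_ofReal (Real.exp_nonneg _)

lemma expNeg_add (x y : ℝ) : expNeg (x + y) = expNeg x * expNeg y := by
  rw [expNeg, neg_add, Real.exp_add, ENNReal.ofReal_mul (Real.exp_nonneg _), expNeg, expNeg]

lemma lintegral_Ioi_expNeg {c : ℝ} (hc : 0 < c) (a : ℝ) :
    ∫⁻ t in Ioi a, expNeg (c * t) = expNeg (c * a) * .ofReal c⁻¹ := by
  have hint := integrableOn_exp_mul_Ioi (neg_lt_zero.2 hc) a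
  have hval := integral_exp_mul_Ioi (neg_lt_zero.2 hc) a
  simp only [neg_mul, neg_div_neg_eq] at hint hval
  unfold expNeg
  rw [← ofReal_integral_eq_lintegral_ofReal hint (.of_forall fun _ => Real.exp_nonneg _), hval,
    div_eq_mul_inv, ENNReal.ofReal_mul (Real.exp_nonneg _)]

lemma lintegral_Ioi_zero_expNeg {c : ℝ} (hc : 0 < c) :
    ∫⁻ t in Ioi 0, expNeg (c * t) = .ofReal c⁻¹ := by
  simpa [expNeg] using lintegral_Ioi_expNeg hc 0

lemma lintegral_Ioi_lintegral_Ioi_expNeg {s c : ℝ} (hs : 0 < s) (hc : 0 < c) :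
    ∫⁻ x in Ioi 0, ∫⁻ y in Ioi x, expNeg (s * x + c * (y - x)) = .ofReal s⁻¹ * .ofReal c⁻¹ := by
  have inner (x : ℝ) :
      ∫⁻ y in Ioi x, expNeg (s * x + c * (y - x)) = expNeg (s * x) * .ofReal c⁻¹ := by
    have split (y : ℝ) : s * x + c * (y - x) = (s * x + -(c * x)) + c * y := by ring
    simp only [split, expNeg_add _ (c * _)]
    rw [lintegral_const_mul _ (by fun_prop), lintegral_Ioi_expNeg hc, ← mul_assoc, ← expNeg_add,
      neg_add_cancel_right]
  simp only [inner]
  rw [lintegral_mul_const _ (by fun_prop), lintegral_Ioi_zero_expNeg hs]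

/-- The Laplace transform `η ↦ ∫₀^∞ e^{-ηt} f(t) dt` of a `[0, ∞]`-valued function. -/
noncomputable def laplaceTransform (η : ℝ) (f : ℝ → ℝ≥0∞) : ℝ≥0∞ :=
  ∫⁻ t in Ioi 0, expNeg (η * t) * f t

lemma laplaceTransform_measure_setOf_le {α : Type*} [MeasurableSpace α] {μ : Measure α} [SFinite μ]
    {f : α → ℝ} (hf : Measurable f) (hf0 : ∀ᵐ x ∂μ, 0 ≤ f x) {η : ℝ} (hη : 0 < η) :
    laplaceTransform η (fun t => μ {x | f x ≤ t})
      = .ofReal η⁻¹ * ∫⁻ x, expNeg (η * f x) ∂μ := by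
  have hle : MeasurableSet {p : ℝ × α | f p.2 ≤ p.1} := measurableSet_le (by fun_prop) (by fun_prop)
  calc laplaceTransform η (fun t => μ {x | f x ≤ t})
      = ∫⁻ t in Ioi 0, ∫⁻ x, {x | f x ≤ t}.indicator (fun _ => expNeg (η * t)) x ∂μ := by
        simp only [laplaceTransform,
          lintegral_indicator_const (measurableSet_le hf measurable_const)]
    _ = ∫⁻ x, (∫⁻ t in Ioi 0, (Ici (f x)).indicator (fun t => expNeg (η * t)) t) ∂μ :=
        lintegral_lintegral_swap
          (Measurable.indicator (f := fun p : ℝ × α => expNeg (η * p.1)) (by fun_prop)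
            hle).aemeasurable
    _ = ∫⁻ x, expNeg (η * f x) * .ofReal η⁻¹ ∂μ := by
        refine lintegral_congr_ae ?_
        filter_upwards [hf0] with x hx
        rw [setLIntegral_congr Ioi_ae_eq_Ici, setLIntegral_indicator measurableSet_Ici,
          Ici_inter_Ici, sup_eq_left.2 hx, ← setLIntegral_congr Ioi_ae_eq_Ici,
          lintegral_Ioi_expNeg hη]
    _ = .ofReal η⁻¹ * ∫⁻ x, expNeg (η * f x) ∂μ := by
        rw [lintegral_mul_const _ (by fun_prop), mul_comm]

lemma laplaceTransform_const_mul {f : ℝ → ℝ≥0∞} (hf : Measurable f) (η : ℝ) (c : ℝ≥0∞) :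
    laplaceTransform η (fun t => c * f t) = c * laplaceTransform η f := by
  simp only [laplaceTransform, mul_left_comm _ c]
  exact lintegral_const_mul c (by fun_prop)

lemma laplaceTransform_laplaceTransform_mul {f g : ℝ → ℝ≥0∞} (hf : Measurable f)
    (hg : Measurable g) (η₁ η₂ : ℝ) :
    laplaceTransform η₁ (fun t₁ => laplaceTransform η₂ (fun t₂ => f t₁ * g t₂))
      = laplaceTransform η₁ f * laplaceTransform η₂ g := by
  simp only [laplaceTransform_const_mul hg, mul_comm _ (laplaceTransform η₂ g)]
  exact laplaceTransform_const_mul hf η₁ _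

lemma lintegral_prod_expNeg_mul {F : ℝ → ℝ → ℝ≥0∞} (hF : Measurable (Function.uncurry F))
    (η₁ η₂ : ℝ) :
    ∫⁻ z, expNeg (η₁ * z.1 + η₂ * z.2) * F z.1 z.2
        ∂(volume.restrict (Ioi 0)).prod (volume.restrict (Ioi 0))
      = laplaceTransform η₁ fun t₁ => laplaceTransform η₂ (F t₁) := by
  have hF' : Measurable fun z : ℝ × ℝ => F z.1 z.2 := hF
  rw [lintegral_prod _ (by fun_prop)]
  refine lintegral_congr fun t₁ => ?_
  simp only [expNeg_add, mul_assoc]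
  exact lintegral_const_mul _ (by fun_prop)

lemma integral_integral_exp_mul_toReal_sub_toReal {F G : ℝ → ℝ → ℝ≥0∞}
    (hF : Measurable (Function.uncurry F)) (hG : Measurable (Function.uncurry G)) {η₁ η₂ : ℝ}
    (hF_fin : laplaceTransform η₁ (fun t₁ => laplaceTransform η₂ (F t₁)) ≠ ∞)
    (hG_fin : laplaceTransform η₁ (fun t₁ => laplaceTransform η₂ (G t₁)) ≠ ∞) :
    ∫ t₁ in Ioi 0, ∫ t₂ in Ioi 0,
        Real.exp (-(η₁ * t₁) - η₂ * t₂) * ((F t₁ t₂).toReal - (G t₁ t₂).toReal)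
      = (laplaceTransform η₁ fun t₁ => laplaceTransform η₂ (F t₁)).toReal
        - (laplaceTransform η₁ fun t₁ => laplaceTransform η₂ (G t₁)).toReal := by
  have hF' : Measurable fun z : ℝ × ℝ => F z.1 z.2 := hF
  have hG' : Measurable fun z : ℝ × ℝ => G z.1 z.2 := hG
  have integrand_eq (t₁ t₂ : ℝ) :
      Real.exp (-(η₁ * t₁) - η₂ * t₂) * ((F t₁ t₂).toReal - (G t₁ t₂).toReal)
        = (expNeg (η₁ * t₁ + η₂ * t₂) * F t₁ t₂).toReal
          - (expNeg (η₁ * t₁ + η₂ * t₂) * G t₁ t₂).toReal := by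
    rw [ENNReal.toReal_mul, ENNReal.toReal_mul, toReal_expNeg, neg_add', mul_sub]
  rw [← lintegral_prod_expNeg_mul hF] at hF_fin ⊢
  rw [← lintegral_prod_expNeg_mul hG] at hG_fin ⊢
  obtain ⟨hint, hval⟩ :=
    integrable_and_integral_toReal_sub (by fun_prop) (by fun_prop) hF_fin hG_fin
  simp only [integrand_eq]
  rw [← hval, integral_prod _ hint]

section Expectation

variable {Ω : Type*} [MeasurableSpace Ω] {P : Measure Ω} [SFinite P] {X Y : ℝ → Ω → ℝ≥0∞}

lemma measurable_laplaceTransform (hX : Measurable (Function.uncurry X)) (η : ℝ) :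
    Measurable fun ω => laplaceTransform η (X · ω) := by
  have hX' : Measurable fun p : ℝ × Ω => X p.1 p.2 := hX
  exact Measurable.lintegral_prod_left'
    (f := fun p : ℝ × Ω => expNeg (η * p.1) * X p.1 p.2) (by fun_prop)

lemma laplaceTransform_lintegral (hX : Measurable (Function.uncurry X)) (η : ℝ) :
    laplaceTransform η (fun t => ∫⁻ ω, X t ω ∂P) = ∫⁻ ω, laplaceTransform η (X · ω) ∂P := by
  have hX' : Measurable fun p : ℝ × Ω => X p.1 p.2 := hX
  unfold laplaceTransform
  rw [lintegral_lintegral_swap (by fun_prop)]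
  exact lintegral_congr fun t => (lintegral_const_mul _ (by fun_prop)).symm

lemma laplaceTransform_laplaceTransform_lintegral_mul (hX : Measurable (Function.uncurry X))
    (hY : Measurable (Function.uncurry Y)) (η₁ η₂ : ℝ) :
    laplaceTransform η₁ (fun t₁ => laplaceTransform η₂ (fun t₂ => ∫⁻ ω, X t₁ ω * Y t₂ ω ∂P))
      = ∫⁻ ω, laplaceTransform η₁ (X · ω) * laplaceTransform η₂ (Y · ω) ∂P := by
  have hX' : Measurable fun p : ℝ × Ω => X p.1 p.2 := hX
  have hY' : Measurable fun p : ℝ × Ω => Y p.1 p.2 := hY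
  have hLY := measurable_laplaceTransform hY η₂
  have inner (t₁ : ℝ) : laplaceTransform η₂ (fun t₂ => ∫⁻ ω, X t₁ ω * Y t₂ ω ∂P)
      = ∫⁻ ω, laplaceTransform η₂ (Y · ω) * X t₁ ω ∂P := by
    rw [laplaceTransform_lintegral (X := fun t₂ ω => X t₁ ω * Y t₂ ω) (by fun_prop)]
    refine lintegral_congr fun ω => ?_
    rw [laplaceTransform_const_mul (by fun_prop), mul_comm]
  simp only [inner]
  rw [laplaceTransform_lintegral (X := fun t₁ ω => laplaceTransform η₂ (Y · ω) * X t₁ ω)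
    ((hLY.comp measurable_snd).mul hX)]
  refine lintegral_congr fun ω => ?_
  rw [laplaceTransform_const_mul (by fun_prop), mul_comm]

lemma integral_integral_exp_mul_covariance (hX : Measurable (Function.uncurry X))
    (hY : Measurable (Function.uncurry Y)) {η₁ η₂ : ℝ}
    (hXY_fin : ∫⁻ ω, laplaceTransform η₁ (X · ω) * laplaceTransform η₂ (Y · ω) ∂P ≠ ∞)
    (hX_fin : ∫⁻ ω, laplaceTransform η₁ (X · ω) ∂P ≠ ∞)
    (hY_fin : ∫⁻ ω, laplaceTransform η₂ (Y · ω) ∂P ≠ ∞) :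
    ∫ t₁ in Ioi 0, ∫ t₂ in Ioi 0, Real.exp (-(η₁ * t₁) - η₂ * t₂) *
        ((∫⁻ ω, X t₁ ω * Y t₂ ω ∂P).toReal - ((∫⁻ ω, X t₁ ω ∂P) * ∫⁻ ω, Y t₂ ω ∂P).toReal)
      = (∫⁻ ω, laplaceTransform η₁ (X · ω) * laplaceTransform η₂ (Y · ω) ∂P).toReal
        - ((∫⁻ ω, laplaceTransform η₁ (X · ω) ∂P)
          * ∫⁻ ω, laplaceTransform η₂ (Y · ω) ∂P).toReal := by
  have hX' : Measurable fun p : ℝ × Ω => X p.1 p.2 := hX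
  have hY' : Measurable fun p : ℝ × Ω => Y p.1 p.2 := hY
  have mixed_eq := laplaceTransform_laplaceTransform_lintegral_mul (P := P) hX hY η₁ η₂
  have product_eq := laplaceTransform_laplaceTransform_mul
    (f := fun t => ∫⁻ ω, X t ω ∂P) (g := fun t => ∫⁻ ω, Y t ω ∂P)
    (by fun_prop) (by fun_prop) η₁ η₂
  rw [laplaceTransform_lintegral hX, laplaceTransform_lintegral hY] at product_eq
  rw [← mixed_eq, ← product_eq]
  exact integral_integral_exp_mul_toReal_sub_toReal
    (F := fun t₁ t₂ => ∫⁻ ω, X t₁ ω * Y t₂ ω ∂P)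
    (G := fun t₁ t₂ => (∫⁻ ω, X t₁ ω ∂P) * ∫⁻ ω, Y t₂ ω ∂P) (by fun_prop) (by fun_prop)
    (by rwa [mixed_eq]) (by rw [product_eq]; finiteness)

end Expectation

section FirstPassage

/-- The right-continuous inverse `inf {x ≥ 0 | h x > t}` of a path `h` on `[0, ∞)`. If `h` never
exceeds `t` on `[0, ∞)`, this is the junk value `sInf ∅ = 0`, not `∞`. -/
noncomputable def firstPassageTime (h : ℝ → ℝ) (t : ℝ) : ℝ := sInf {x | 0 ≤ x ∧ h x > t}

/-- The Lebesgue measure of the set of times `x > 0` at which the path `h` is at most `t`. It is the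
measurable, `[0, ∞]`-valued substitute for the inverse of a nondecreasing path. -/
noncomputable def occupationTime (h : ℝ → ℝ) (t : ℝ) : ℝ≥0∞ :=
  volume.restrict (Ioi 0) {x | h x ≤ t}

lemma firstPassageTime_nonneg (h : ℝ → ℝ) (t : ℝ) : 0 ≤ firstPassageTime h t :=
  Real.sInf_nonneg fun _ hx => hx.1

lemma occupationTime_eq_ofReal_firstPassageTime {h : ℝ → ℝ} (hmono : MonotoneOn h (Ici 0)) {t : ℝ}
    (hexceeds : ∃ x, 0 ≤ x ∧ h x > t) :
    occupationTime h t = .ofReal (firstPassageTime h t) := by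
  have hbdd : BddBelow {x | 0 ≤ x ∧ h x > t} := ⟨0, fun _ hx => hx.1⟩
  have below : Ioo 0 (firstPassageTime h t) ⊆ {x | h x ≤ t} ∩ Ioi 0 := fun x hx =>
    ⟨not_lt.1 fun hlt => (csInf_le hbdd ⟨hx.1.le, hlt⟩).not_gt hx.2, hx.1⟩
  have above : {x | h x ≤ t} ∩ Ioi 0 ⊆ Ioc 0 (firstPassageTime h t) := fun x ⟨hxt, hx0⟩ =>
    ⟨hx0, le_csInf hexceeds fun y hy => le_of_not_ge fun hyx =>
      hy.2.not_ge ((hmono hy.1 (mem_Ioi.1 hx0).le hyx).trans hxt)⟩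
  rw [occupationTime, Measure.restrict_apply' measurableSet_Ioi]
  apply le_antisymm
  · simpa using measure_mono (μ := volume) above
  · simpa using measure_mono (μ := volume) below

lemma laplaceTransform_occupationTime {h : ℝ → ℝ} (hmeas : Measurable h) (hnonneg : ∀ x, 0 ≤ h x)
    {η : ℝ} (hη : 0 < η) :
    laplaceTransform η (occupationTime h) = .ofReal η⁻¹ * ∫⁻ x in Ioi 0, expNeg (η * h x) :=
  laplaceTransform_measure_setOf_le hmeas (.of_forall hnonneg) hη

lemma measurable_occupationTime {Ω : Type*} [MeasurableSpace Ω] {H : ℝ → Ω → ℝ}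
    (hH : Measurable (Function.uncurry H)) :
    Measurable (Function.uncurry fun t ω => occupationTime (H · ω) t) := by
  have hH' : Measurable fun p : ℝ × Ω => H p.1 p.2 := hH
  exact measurable_measure_prodMk_left (s := {q : (ℝ × Ω) × ℝ | H q.2 q.1.2 ≤ q.1.1})
    (measurableSet_le (by fun_prop) (by fun_prop))

end FirstPassage

/-- A bivariate process `(H₁, H₂)` on `[0, ∞)` started at the origin, with independent stationary
increments whose joint Laplace exponent is `S`. Independence is only asked between an increment and
the value at its left end point. -/
structure HasJointLaplaceExponent {Ω : Type*} [MeasurableSpace Ω] (P : Measure Ω)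
    (H₁ H₂ : ℝ → Ω → ℝ) (S : ℝ → ℝ → ℝ) : Prop where
  measurable_fst : Measurable (Function.uncurry H₁)
  measurable_snd : Measurable (Function.uncurry H₂)
  zero : ∀ᵐ ω ∂P, H₁ 0 ω = 0 ∧ H₂ 0 ω = 0
  indepFun : ∀ s t : ℝ, 0 ≤ s → s ≤ t →
    IndepFun (fun ω => (H₁ t ω - H₁ s ω, H₂ t ω - H₂ s ω)) (fun ω => (H₁ s ω, H₂ s ω)) P
  integral_exp : ∀ s t α β : ℝ, 0 ≤ s → s ≤ t → 0 ≤ α → 0 ≤ β →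
    ∫ ω, Real.exp (-(α * (H₁ t ω - H₁ s ω)) - β * (H₂ t ω - H₂ s ω)) ∂P
      = Real.exp (-(t - s) * S α β)

namespace HasJointLaplaceExponent

variable {Ω : Type*} [MeasurableSpace Ω] {P : Measure Ω} {H₁ H₂ : ℝ → Ω → ℝ} {S : ℝ → ℝ → ℝ}
  {α β x y : ℝ}

lemma swap (hH : HasJointLaplaceExponent P H₁ H₂ S) :
    HasJointLaplaceExponent P H₂ H₁ (fun α β => S β α) where
  measurable_fst := hH.measurable_snd
  measurable_snd := hH.measurable_fst
  zero := hH.zero.mono fun _ hω => hω.symm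
  indepFun s t hs hst := (hH.indepFun s t hs hst).comp measurable_swap measurable_swap
  integral_exp s t α β hs hst hα hβ := by
    rw [← hH.integral_exp s t β α hs hst hβ hα]
    congr! 3
    ring

lemma lintegral_expNeg_increment (hH : HasJointLaplaceExponent P H₁ H₂ S) (hx : 0 ≤ x)
    (hxy : x ≤ y) (hα : 0 ≤ α) (hβ : 0 ≤ β) :
    ∫⁻ ω, expNeg (α * (H₁ y ω - H₁ x ω) + β * (H₂ y ω - H₂ x ω)) ∂P
      = expNeg (S α β * (y - x)) := by
  have hval := hH.integral_exp x y α β hx hxy hα hβ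
  have hint := not_imp_comm.1 integral_undef (hval.trans_ne (Real.exp_ne_zero _))
  simp only [expNeg, neg_add']
  rw [← ofReal_integral_eq_lintegral_ofReal hint (.of_forall fun _ => Real.exp_nonneg _), hval]
  ring_nf

lemma lintegral_expNeg (hH : HasJointLaplaceExponent P H₁ H₂ S) (hx : 0 ≤ x) (hα : 0 ≤ α)
    (hβ : 0 ≤ β) : ∫⁻ ω, expNeg (α * H₁ x ω + β * H₂ x ω) ∂P = expNeg (S α β * x) := by
  rw [← sub_zero x, ← hH.lintegral_expNeg_increment le_rfl hx hα hβ]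
  refine lintegral_congr_ae (hH.zero.mono fun ω hω => ?_)
  simp [hω.1, hω.2]

lemma lintegral_expNeg_fst (hH : HasJointLaplaceExponent P H₁ H₂ S) (hx : 0 ≤ x) (hα : 0 ≤ α) :
    ∫⁻ ω, expNeg (α * H₁ x ω) ∂P = expNeg (S α 0 * x) := by
  simpa using hH.lintegral_expNeg hx hα le_rfl

lemma lintegral_expNeg_increment_mul_expNeg (hH : HasJointLaplaceExponent P H₁ H₂ S)
    {a b : ℝ} (hx : 0 ≤ x) (hxy : x ≤ y) (ha : 0 ≤ a) (hb : 0 ≤ b) (hα : 0 ≤ α) (hβ : 0 ≤ β) :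
    ∫⁻ ω, expNeg (a * (H₁ y ω - H₁ x ω) + b * (H₂ y ω - H₂ x ω))
        * expNeg (α * H₁ x ω + β * H₂ x ω) ∂P
      = expNeg (S a b * (y - x)) * expNeg (S α β * x) := by
  have hH₁ : Measurable fun p : ℝ × Ω => H₁ p.1 p.2 := hH.measurable_fst
  have hH₂ : Measurable fun p : ℝ × Ω => H₂ p.1 p.2 := hH.measurable_snd
  rw [← hH.lintegral_expNeg_increment hx hxy ha hb, ← hH.lintegral_expNeg hx hα hβ]
  refine lintegral_mul_eq_lintegral_mul_lintegral_of_indepFun'' (by fun_prop) (by fun_prop) ?_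
  exact (hH.indepFun x y hx hxy).comp (φ := fun p : ℝ × ℝ => expNeg (a * p.1 + b * p.2))
    (ψ := fun p : ℝ × ℝ => expNeg (α * p.1 + β * p.2)) (by fun_prop) (by fun_prop)

lemma lintegral_expNeg_mul_expNeg_of_le (hH : HasJointLaplaceExponent P H₁ H₂ S) (hx : 0 ≤ x)
    (hxy : x ≤ y) (hα : 0 ≤ α) (hβ : 0 ≤ β) :
    ∫⁻ ω, expNeg (α * H₁ x ω) * expNeg (β * H₂ y ω) ∂P
      = expNeg (S α β * x + S 0 β * (y - x)) := by
  rw [add_comm, expNeg_add,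
    ← hH.lintegral_expNeg_increment_mul_expNeg hx hxy le_rfl hβ hα hβ]
  refine lintegral_congr fun ω => ?_
  simp only [← expNeg_add]
  ring_nf

lemma lintegral_lintegral_expNeg_fst [SFinite P] (hH : HasJointLaplaceExponent P H₁ H₂ S)
    (hα : 0 ≤ α) (hT₁ : 0 < S α 0) :
    ∫⁻ ω, (∫⁻ x in Ioi 0, expNeg (α * H₁ x ω)) ∂P = .ofReal (S α 0)⁻¹ := by
  have hH₁ : Measurable fun p : ℝ × Ω => H₁ p.1 p.2 := hH.measurable_fst
  rw [lintegral_lintegral_swap (by fun_prop), ← lintegral_Ioi_zero_expNeg hT₁]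
  exact setLIntegral_congr_fun measurableSet_Ioi fun x hx =>
    hH.lintegral_expNeg_fst (le_of_lt hx) hα

lemma lintegral_mul_lintegral_expNeg [SFinite P] (hH : HasJointLaplaceExponent P H₁ H₂ S)
    (hα : 0 ≤ α) (hβ : 0 ≤ β) (hT₁ : 0 < S α 0) (hT₂ : 0 < S 0 β) (hS : 0 < S α β) :
    ∫⁻ ω, (∫⁻ x in Ioi 0, expNeg (α * H₁ x ω)) * (∫⁻ y in Ioi 0, expNeg (β * H₂ y ω)) ∂P
      = .ofReal (S α β)⁻¹ * .ofReal (S 0 β)⁻¹ + .ofReal (S α β)⁻¹ * .ofReal (S α 0)⁻¹ := by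
  have hH₁ : Measurable fun p : ℝ × Ω => H₁ p.1 p.2 := hH.measurable_fst
  have hH₂ : Measurable fun p : ℝ × Ω => H₂ p.1 p.2 := hH.measurable_snd
  rw [lintegral_lintegral_mul_lintegral (f := fun x ω => expNeg (α * H₁ x ω))
      (g := fun y ω => expNeg (β * H₂ y ω)) (by fun_prop) (by fun_prop),
    lintegral_Ioi_lintegral_Ioi_eq_add volume
      (f := fun x y => ∫⁻ ω, expNeg (α * H₁ x ω) * expNeg (β * H₂ y ω) ∂P) (by fun_prop),
    ← lintegral_Ioi_lintegral_Ioi_expNeg hS hT₂, ← lintegral_Ioi_lintegral_Ioi_expNeg hS hT₁]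
  congr 1
  · refine setLIntegral_congr_fun measurableSet_Ioi fun x hx => ?_
    exact setLIntegral_congr_fun measurableSet_Ioi fun y hy =>
      hH.lintegral_expNeg_mul_expNeg_of_le (le_of_lt hx) (le_of_lt hy) hα hβ
  · refine setLIntegral_congr_fun measurableSet_Ioi fun y hy => ?_
    rw [← setLIntegral_congr Ioi_ae_eq_Ici]
    refine setLIntegral_congr_fun measurableSet_Ioi fun x hx => ?_
    simpa only [mul_comm] using
      hH.swap.lintegral_expNeg_mul_expNeg_of_le (le_of_lt hy) (le_of_lt hx) hβ hα

lemma lintegral_laplaceTransform_occupationTime_fst [SFinite P]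
    (hH : HasJointLaplaceExponent P H₁ H₂ S) (hH₁ : ∀ x ω, 0 ≤ H₁ x ω) (hα : 0 < α)
    (hT₁ : 0 < S α 0) :
    ∫⁻ ω, laplaceTransform α (occupationTime (H₁ · ω)) ∂P = .ofReal (α * S α 0)⁻¹ := by
  have hmeas : Measurable fun p : ℝ × Ω => H₁ p.1 p.2 := hH.measurable_fst
  rw [mul_inv, ENNReal.ofReal_mul (inv_nonneg.2 hα.le),
    ← hH.lintegral_lintegral_expNeg_fst hα.le hT₁, ← lintegral_const_mul _ (by fun_prop)]
  exact lintegral_congr fun ω =>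
    laplaceTransform_occupationTime (by fun_prop) (hH₁ · ω) hα

lemma lintegral_laplaceTransform_occupationTime_mul [SFinite P]
    (hH : HasJointLaplaceExponent P H₁ H₂ S) (hH₁ : ∀ x ω, 0 ≤ H₁ x ω) (hH₂ : ∀ x ω, 0 ≤ H₂ x ω)
    (hα : 0 < α) (hβ : 0 < β) (hT₁ : 0 < S α 0) (hT₂ : 0 < S 0 β) (hS : 0 < S α β) :
    ∫⁻ ω, laplaceTransform α (occupationTime (H₁ · ω))
        * laplaceTransform β (occupationTime (H₂ · ω)) ∂P
      = .ofReal ((α * β * S α β)⁻¹ * ((S 0 β)⁻¹ + (S α 0)⁻¹)) := by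
  have hmeas₁ : Measurable fun p : ℝ × Ω => H₁ p.1 p.2 := hH.measurable_fst
  have hmeas₂ : Measurable fun p : ℝ × Ω => H₂ p.1 p.2 := hH.measurable_snd
  calc ∫⁻ ω, laplaceTransform α (occupationTime (H₁ · ω))
        * laplaceTransform β (occupationTime (H₂ · ω)) ∂P
      = .ofReal α⁻¹ * .ofReal β⁻¹ * ∫⁻ ω, (∫⁻ x in Ioi 0, expNeg (α * H₁ x ω))
          * (∫⁻ y in Ioi 0, expNeg (β * H₂ y ω)) ∂P := by
        rw [← lintegral_const_mul _ (by fun_prop)]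
        refine lintegral_congr fun ω => ?_
        rw [laplaceTransform_occupationTime (by fun_prop) (hH₁ · ω) hα,
          laplaceTransform_occupationTime (by fun_prop) (hH₂ · ω) hβ, mul_mul_mul_comm]
    _ = .ofReal α⁻¹ * .ofReal β⁻¹ *
          (.ofReal (S α β)⁻¹ * (.ofReal (S 0 β)⁻¹ + .ofReal (S α 0)⁻¹)) := by
        rw [hH.lintegral_mul_lintegral_expNeg hα.le hβ.le hT₁ hT₂ hS, ← mul_add]
    _ = .ofReal ((α * β * S α β)⁻¹ * ((S 0 β)⁻¹ + (S α 0)⁻¹)) := by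
        rw [← ENNReal.ofReal_add (by positivity) (by positivity),
          ← ENNReal.ofReal_mul (by positivity), ← ENNReal.ofReal_mul (by positivity),
          ← ENNReal.ofReal_mul (by positivity), ← mul_inv, ← mul_assoc, ← mul_inv]

lemma integral_integral_exp_mul_covariance_occupationTime [SFinite P]
    (hH : HasJointLaplaceExponent P H₁ H₂ S) (hH₁ : ∀ x ω, 0 ≤ H₁ x ω) (hH₂ : ∀ x ω, 0 ≤ H₂ x ω)
    (hα : 0 < α) (hβ : 0 < β) (hT₁ : 0 < S α 0) (hT₂ : 0 < S 0 β) (hS : 0 < S α β) :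
    ∫ t₁ in Ioi 0, ∫ t₂ in Ioi 0, Real.exp (-(α * t₁) - β * t₂) *
        ((∫⁻ ω, occupationTime (H₁ · ω) t₁ * occupationTime (H₂ · ω) t₂ ∂P).toReal
          - ((∫⁻ ω, occupationTime (H₁ · ω) t₁ ∂P)
            * ∫⁻ ω, occupationTime (H₂ · ω) t₂ ∂P).toReal)
      = (S α 0 + S 0 β - S α β) / (α * β * S α 0 * S 0 β * S α β) := by
  have mixed_eq := hH.lintegral_laplaceTransform_occupationTime_mul hH₁ hH₂ hα hβ hT₁ hT₂ hS
  have mean_eq₁ := hH.lintegral_laplaceTransform_occupationTime_fst hH₁ hα hT₁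
  have mean_eq₂ := hH.swap.lintegral_laplaceTransform_occupationTime_fst hH₂ hβ hT₂
  rw [integral_integral_exp_mul_covariance (measurable_occupationTime hH.measurable_fst)
    (measurable_occupationTime hH.measurable_snd) (mixed_eq ▸ ENNReal.ofReal_ne_top)
    (mean_eq₁ ▸ ENNReal.ofReal_ne_top) (mean_eq₂ ▸ ENNReal.ofReal_ne_top),
    mixed_eq, mean_eq₁, mean_eq₂, ENNReal.toReal_mul, ENNReal.toReal_ofReal (by positivity),
    ENNReal.toReal_ofReal (by positivity), ENNReal.toReal_ofReal (by positivity)]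
  field_simp

end HasJointLaplaceExponent

/-- Double Laplace transform of the covariance
`Cov(L₁(t₁),L₂(t₂)) = E[L₁(t₁)L₂(t₂)] − E[L₁(t₁)]E[L₂(t₂)]`,
with `T₁(η) = S(η,0)` and `T₂(η) = S(0,η)`. -/
theorem laplace_transform_covariance
    {Ω : Type*} [MeasurableSpace Ω] (P : Measure Ω) [IsProbabilityMeasure P]
    (H1 H2 : ℝ → Ω → ℝ) (S : ℝ → ℝ → ℝ)
    (hH1meas : Measurable (Function.uncurry H1))
    (hH2meas : Measurable (Function.uncurry H2))
    (hH1nonneg : ∀ x ω, 0 ≤ H1 x ω) (hH2nonneg : ∀ x ω, 0 ≤ H2 x ω)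
    (hzero : ∀ᵐ ω ∂P, H1 0 ω = 0 ∧ H2 0 ω = 0)
    (hSnonneg : ∀ α β : ℝ, 0 ≤ α → 0 ≤ β → 0 ≤ S α β)
    (hindep : ∀ s t : ℝ, 0 ≤ s → s ≤ t →
      IndepFun (fun ω => (H1 t ω - H1 s ω, H2 t ω - H2 s ω))
        (fun ω => (H1 s ω, H2 s ω)) P)
    (hincr : ∀ s t α β : ℝ, 0 ≤ s → s ≤ t → 0 ≤ α → 0 ≤ β →
      ∫ ω, Real.exp (-(α * (H1 t ω - H1 s ω)) - β * (H2 t ω - H2 s ω)) ∂P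
        = Real.exp (-(t - s) * S α β))
    (hpath : ∀ᵐ ω ∂P,
      (∀ x y : ℝ, 0 ≤ x → x ≤ y → H1 x ω ≤ H1 y ω) ∧
      (∀ M : ℝ, ∃ x : ℝ, 0 ≤ x ∧ H1 x ω > M) ∧
      (∀ x y : ℝ, 0 ≤ x → x ≤ y → H2 x ω ≤ H2 y ω) ∧
      (∀ M : ℝ, ∃ x : ℝ, 0 ≤ x ∧ H2 x ω > M))
    (L1 L2 : ℝ → Ω → ℝ)
    (hL1 : ∀ t ω, L1 t ω = sInf {x : ℝ | 0 ≤ x ∧ H1 x ω > t})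
    (hL2 : ∀ t ω, L2 t ω = sInf {x : ℝ | 0 ≤ x ∧ H2 x ω > t})
    (η1 η2 : ℝ) (hη1 : 0 < η1) (hη2 : 0 < η2)
    (hT1 : 0 < S η1 0) (hT2 : 0 < S 0 η2) (hS : 0 < S η1 η2) :
    ∫ t1 in Set.Ioi (0 : ℝ), ∫ t2 in Set.Ioi (0 : ℝ),
        Real.exp (-(η1 * t1) - η2 * t2) *
          ((∫ ω, L1 t1 ω * L2 t2 ω ∂P) - (∫ ω, L1 t1 ω ∂P) * (∫ ω, L2 t2 ω ∂P))
      = (S η1 0 + S 0 η2 - S η1 η2) / (η1 * η2 * S η1 0 * S 0 η2 * S η1 η2) := by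
  obtain rfl : L1 = fun t ω => firstPassageTime (H1 · ω) t := funext₂ hL1
  obtain rfl : L2 = fun t ω => firstPassageTime (H2 · ω) t := funext₂ hL2
  have hH : HasJointLaplaceExponent P H1 H2 S := ⟨hH1meas, hH2meas, hzero, hindep, hincr⟩
  have occupation_eq₁ : ∀ᵐ ω ∂P, ∀ t,
      occupationTime (H1 · ω) t = .ofReal (firstPassageTime (H1 · ω) t) :=
    hpath.mono fun ω hω t => occupationTime_eq_ofReal_firstPassageTime
      (fun x hx y _ hxy => hω.1 x y hx hxy) (hω.2.1 t)
  have occupation_eq₂ : ∀ᵐ ω ∂P, ∀ t,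
      occupationTime (H2 · ω) t = .ofReal (firstPassageTime (H2 · ω) t) :=
    hpath.mono fun ω hω t => occupationTime_eq_ofReal_firstPassageTime
      (fun x hx y _ hxy => hω.2.2.1 x y hx hxy) (hω.2.2.2 t)
  have covariance_eq (t₁ t₂ : ℝ) := covariance_eq_toReal_lintegral_sub
    ((measurable_occupationTime hH1meas).of_uncurry_left (x := t₁)).aemeasurable
    ((measurable_occupationTime hH2meas).of_uncurry_left (x := t₂)).aemeasurable
    (.of_forall fun ω => firstPassageTime_nonneg (H1 · ω) t₁)
    (.of_forall fun ω => firstPassageTime_nonneg (H2 · ω) t₂)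
    (occupation_eq₁.mono fun ω hω => hω t₁) (occupation_eq₂.mono fun ω hω => hω t₂)
  simp only [covariance_eq]
  exact hH.integral_integral_exp_mul_covariance_occupationTime hH1nonneg hH2nonneg hη1 hη2
    hT1 hT2 hS
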